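/- If M is a stochastic matrix that is reversible with respect to a strictly positive distribution and satisfies M^{m+δ} = M^m for all positive integers δ for some m ≥ 1, then M is idempotent: M² = M. -/

import Mathlib

/-!
The condition `SemiconjBy P Aᴴ A`, that is `P * Aᴴ = A * P`, says that `Aᴴ` is self-adjoint for the
form `xᴴ P y`; reversibility is the case of `P` diagonal and positive. It passes from `A` to
`A * A - A`, which is nilpotent once the powers of `A` stabilize. A nilpotent operator that is
self-adjoint for a positive definite form vanishes, since `A * A = 0` gives
`A * P * Aᴴ = A * A * P = 0`, hence `A = 0`, and the condition passes to powers of `A`.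
-/

open Matrix

theorem isNilpotent_mul_self_sub_self_of_pow_succ_eq_pow {R : Type*} [Ring R] {a : R} {m : ℕ}
    (h : a ^ (m + 1) = a ^ m) : IsNilpotent (a * a - a) := by
  have h_ann : a ^ m * (a - 1) = 0 := by rw [mul_sub_one, ← pow_succ, h, sub_self]
  have h_comm : Commute a (a - 1) := (Commute.refl a).sub_right (Commute.one_right a)
  refine ⟨m + 1, ?_⟩
  calc (a * a - a) ^ (m + 1)
      = a ^ (m + 1) * (a - 1) ^ (m + 1) := by rw [← mul_sub_one, h_comm.mul_pow]
    _ = a ^ m * (a - 1) * (a - 1) ^ m := by rw [h, pow_succ' (a - 1), mul_assoc]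
    _ = 0 := by rw [h_ann, zero_mul]

theorem semiconjBy_of_inv_mul_mul_eq {ι R : Type*} [Fintype ι] [DecidableEq ι] [CommRing R]
    {P A B : Matrix ι ι R} (hP : IsUnit P) (h : P⁻¹ * B * P = A) : SemiconjBy P A B := by
  rw [SemiconjBy, ← h, mul_assoc, mul_nonsing_inv_cancel_left _ _ ((isUnit_iff_isUnit_det P).mp hP)]

theorem semiconjBy_conjTranspose_pow {ι R : Type*} [Fintype ι] [DecidableEq ι] [Semiring R]
    [StarRing R] {P A : Matrix ι ι R} (hA : SemiconjBy P Aᴴ A) (k : ℕ) :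
    SemiconjBy P (A ^ k)ᴴ (A ^ k) := by
  simpa only [conjTranspose_pow] using hA.pow_right k

section PosDef

variable {ι κ R : Type*} [Fintype ι] [Ring R] [PartialOrder R] [StarRing R] {P : Matrix ι ι R}

theorem eq_zero_of_posDef_of_mul_mul_conjTranspose_eq_zero (hP : P.PosDef) {B : Matrix κ ι R}
    (h : B * P * Bᴴ = 0) : B = 0 := by
  refine Matrix.ext_row fun i => ?_
  by_contra h_row
  have h_pos : 0 < B.row i ⬝ᵥ (P *ᵥ star (B.row i)) := by
    simpa only [star_star] using hP.dotProduct_mulVec_pos (star_ne_zero.mpr h_row)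
  have h_diag : (B * P * Bᴴ) i i = B.row i ⬝ᵥ (P *ᵥ star (B.row i)) := by
    rw [Matrix.mul_assoc]
    rfl
  exact h_pos.ne (by rw [← h_diag, h, Matrix.zero_apply])

theorem eq_zero_of_semiconjBy_conjTranspose_of_mul_self_eq_zero (hP : P.PosDef)
    {A : Matrix ι ι R} (hA : SemiconjBy P Aᴴ A) (h : A * A = 0) : A = 0 :=
  eq_zero_of_posDef_of_mul_mul_conjTranspose_eq_zero hP <| by
    rw [mul_assoc, hA.eq, ← mul_assoc, h, zero_mul]

variable [DecidableEq ι] {A : Matrix ι ι R}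

theorem eq_zero_of_semiconjBy_conjTranspose_of_isNilpotent (hP : P.PosDef)
    (hA : SemiconjBy P Aᴴ A) (h_nil : IsNilpotent A) : A = 0 := by
  have h_two_pow (k : ℕ) (hk : A ^ 2 ^ k = 0) : A = 0 := by
    induction k with
    | zero => simpa only [pow_zero, pow_one] using hk
    | succ k ih =>
      refine ih (eq_zero_of_semiconjBy_conjTranspose_of_mul_self_eq_zero hP
        (semiconjBy_conjTranspose_pow hA _) ?_)
      rw [← pow_add, ← two_mul, ← pow_succ', hk]
  obtain ⟨k, hk⟩ := h_nil
  exact h_two_pow k (pow_eq_zero_of_le Nat.lt_two_pow_self.le hk)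

theorem stmt_15_general (hP : P.PosDef) (hA : SemiconjBy P Aᴴ A) {m : ℕ}
    (h : A ^ (m + 1) = A ^ m) : A * A = A := by
  have h_selfAdj : SemiconjBy P (A * A - A)ᴴ (A * A - A) := by
    simpa only [conjTranspose_sub, conjTranspose_mul] using (hA.mul_right hA).sub_right hA
  exact sub_eq_zero.mp <| eq_zero_of_semiconjBy_conjTranspose_of_isNilpotent hP h_selfAdj
    (isNilpotent_mul_self_sub_self_of_pow_succ_eq_pow h)

end PosDef

theorem stmt_15 {n : ℕ} (M : Matrix (Fin n) (Fin n) ℝ)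
    (hnn : ∀ i j, 0 ≤ M i j) (hrow : ∀ i, ∑ j, M i j = 1)
    (d : Fin n → ℝ) (hd : ∀ i, 0 < d i)
    (hrev : (Matrix.diagonal d)⁻¹ * M * Matrix.diagonal d = Matrix.transpose M)
    (m : ℕ) (hm : 1 ≤ m) (h : ∀ δ : ℕ, 1 ≤ δ → M ^ (m + δ) = M ^ m) :
    M * M = M := by
  have hP : (diagonal d).PosDef := .diagonal hd
  exact stmt_15_general hP (semiconjBy_of_inv_mul_mul_eq hP.isUnit hrev) (h 1 le_rfl)
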